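/- For s = (s₁,s₂,s₃) ∈ ℝ³ with all s_k ≠ 0, define ρ(s)_k = (s_ℓ − s_m)/s_k for each cyclic permutation (k,ℓ,m) of (1,2,3). Then: (a) ∏_{k=1}^{3} (1 + ρ(s)_k) = ∏_{k=1}^{3} (1 − ρ(s)_k); (b) if s' ∈ ℝ³ also has all coordinates nonzero and ρ(s') = ρ(s), then there exists λ ≠ 0 with s' = λ·s; (c) the transformation s ↦ s̃ defined by s̃_k = (−s_k + s_ℓ + s_m)/(s_ℓ s_m) satisfies (s̃)̃ = s and ρ(s̃) = −ρ(s) (whenever the relevant coordinates are nonzero). -/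

import Mathlib

/-!
Clearing denominators, `ρ(s') = ρ(s)` says that consecutive coordinates of the cross product
`s' × s` are opposite to each other. Going once around the cycle of odd length three, each
coordinate is its own opposite, so `s' × s = 0` as soon as `2 ≠ 0`. For the product identity,
`s_k (1 + ρ_k) = s_k + s_ℓ - s_m = s_ℓ (1 - ρ_ℓ)`. The claims on `s̃` come from the two
factorizations `s̃_ℓ - s̃_m = -ρ_k s̃_k` and `-s̃_k + s̃_ℓ + s̃_m = s_k s̃_ℓ s̃_m`.
-/

section CyclicRatio

variable {K : Type*} [Field K] {a b c a' b' c' : K}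

/-- The coordinate `ρ(s)_k`, as a function of `(s_k, s_ℓ, s_m) = (a, b, c)`; the other two
coordinates are obtained by permuting the arguments cyclically. -/
def cyclicRatio (a b c : K) : K := (b - c) / a

/-- The coordinate `s̃_k` of the involution `s ↦ s̃`, as a function of
`(s_k, s_ℓ, s_m) = (a, b, c)`; the other two coordinates are obtained by permuting the arguments
cyclically. -/
def cyclicDual (a b c : K) : K := (-a + b + c) / (b * c)

lemma mul_one_add_cyclicRatio (ha : a ≠ 0) (hb : b ≠ 0) :
    a * (1 + cyclicRatio a b c) = b * (1 - cyclicRatio b c a) := by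
  simp only [cyclicRatio, mul_add, mul_sub, mul_div_cancel₀ _ ha, mul_div_cancel₀ _ hb]
  ring

lemma prod_one_add_cyclicRatio (ha : a ≠ 0) (hb : b ≠ 0) (hc : c ≠ 0) :
    (1 + cyclicRatio a b c) * (1 + cyclicRatio b c a) * (1 + cyclicRatio c a b) =
      (1 - cyclicRatio a b c) * (1 - cyclicRatio b c a) * (1 - cyclicRatio c a b) := by
  apply mul_left_cancel₀ (mul_ne_zero (mul_ne_zero ha hb) hc)
  calc
    _ = (a * (1 + cyclicRatio a b c)) * (b * (1 + cyclicRatio b c a)) *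
          (c * (1 + cyclicRatio c a b)) := by ring
    _ = (b * (1 - cyclicRatio b c a)) * (c * (1 - cyclicRatio c a b)) *
          (a * (1 - cyclicRatio a b c)) := by
      rw [mul_one_add_cyclicRatio ha hb, mul_one_add_cyclicRatio hb hc,
        mul_one_add_cyclicRatio hc ha]
    _ = _ := by ring

lemma cyclicRatio_eq_cyclicRatio_iff (ha' : a' ≠ 0) (ha : a ≠ 0) :
    cyclicRatio a' b' c' = cyclicRatio a b c ↔ a' * b - b' * a = -(c' * a - a' * c) := by
  rw [cyclicRatio, cyclicRatio, div_eq_div_iff ha' ha]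
  constructor <;> intro h <;> linear_combination -h

lemma mul_eq_mul_of_cyclicRatio_eq [NeZero (2 : K)]
    (ha : a ≠ 0) (hb : b ≠ 0) (hc : c ≠ 0) (ha' : a' ≠ 0) (hb' : b' ≠ 0) (hc' : c' ≠ 0)
    (h₁ : cyclicRatio a' b' c' = cyclicRatio a b c)
    (h₂ : cyclicRatio b' c' a' = cyclicRatio b c a)
    (h₃ : cyclicRatio c' a' b' = cyclicRatio c a b) :
    a' * b = b' * a := by
  rw [cyclicRatio_eq_cyclicRatio_iff ha' ha] at h₁
  rw [cyclicRatio_eq_cyclicRatio_iff hb' hb] at h₂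
  rw [cyclicRatio_eq_cyclicRatio_iff hc' hc] at h₃
  have two_mul_minor : 2 * (a' * b - b' * a) = 0 := by linear_combination h₁ + h₂ - h₃
  exact sub_eq_zero.mp ((mul_eq_zero_iff_left two_ne_zero).mp two_mul_minor)

lemma exists_eq_mul_of_cyclicRatio_eq [NeZero (2 : K)]
    (ha : a ≠ 0) (hb : b ≠ 0) (hc : c ≠ 0) (ha' : a' ≠ 0) (hb' : b' ≠ 0) (hc' : c' ≠ 0)
    (h₁ : cyclicRatio a' b' c' = cyclicRatio a b c)
    (h₂ : cyclicRatio b' c' a' = cyclicRatio b c a)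
    (h₃ : cyclicRatio c' a' b' = cyclicRatio c a b) :
    ∃ l : K, l ≠ 0 ∧ a' = l * a ∧ b' = l * b ∧ c' = l * c := by
  have hab : a' * b = b' * a := mul_eq_mul_of_cyclicRatio_eq ha hb hc ha' hb' hc' h₁ h₂ h₃
  have hca : c' * a = a' * c := mul_eq_mul_of_cyclicRatio_eq hc ha hb hc' ha' hb' h₃ h₁ h₂
  refine ⟨a' / a, div_ne_zero ha' ha, (div_mul_cancel₀ a' ha).symm, ?_, ?_⟩
  · rw [div_mul_eq_mul_div, hab, mul_div_cancel_right₀ b' ha]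
  · rw [div_mul_eq_mul_div, ← hca, mul_div_cancel_right₀ c' ha]

lemma cyclicDual_sub_cyclicDual (ha : a ≠ 0) (hb : b ≠ 0) (hc : c ≠ 0) :
    cyclicDual b c a - cyclicDual c a b = -cyclicRatio a b c * cyclicDual a b c := by
  unfold cyclicDual cyclicRatio
  field_simp
  ring

lemma cyclicRatio_cyclicDual (ha : a ≠ 0) (hb : b ≠ 0) (hc : c ≠ 0)
    (hdual : cyclicDual a b c ≠ 0) :
    cyclicRatio (cyclicDual a b c) (cyclicDual b c a) (cyclicDual c a b) =
      -cyclicRatio a b c :=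
  (div_eq_iff hdual).mpr (cyclicDual_sub_cyclicDual ha hb hc)

lemma neg_cyclicDual_add_add (ha : a ≠ 0) (hb : b ≠ 0) (hc : c ≠ 0) :
    -cyclicDual a b c + cyclicDual b c a + cyclicDual c a b =
      a * (cyclicDual b c a * cyclicDual c a b) := by
  unfold cyclicDual
  field_simp
  ring

lemma cyclicDual_cyclicDual (ha : a ≠ 0) (hb : b ≠ 0) (hc : c ≠ 0)
    (hdual_b : cyclicDual b c a ≠ 0) (hdual_c : cyclicDual c a b ≠ 0) :
    cyclicDual (cyclicDual a b c) (cyclicDual b c a) (cyclicDual c a b) = a :=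
  (div_eq_iff (mul_ne_zero hdual_b hdual_c)).mpr (neg_cyclicDual_add_add ha hb hc)

end CyclicRatio

theorem stmt_9_general {K : Type*} [Field K] [NeZero (2 : K)] {a b c : K}
    (ha : a ≠ 0) (hb : b ≠ 0) (hc : c ≠ 0) :
    ((1 + cyclicRatio a b c) * (1 + cyclicRatio b c a) * (1 + cyclicRatio c a b) =
      (1 - cyclicRatio a b c) * (1 - cyclicRatio b c a) * (1 - cyclicRatio c a b)) ∧
    (∀ a' b' c' : K, a' ≠ 0 → b' ≠ 0 → c' ≠ 0 →
      cyclicRatio a' b' c' = cyclicRatio a b c →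
      cyclicRatio b' c' a' = cyclicRatio b c a →
      cyclicRatio c' a' b' = cyclicRatio c a b →
      ∃ l : K, l ≠ 0 ∧ a' = l * a ∧ b' = l * b ∧ c' = l * c) ∧
    (∀ x y z : K, x = cyclicDual a b c → y = cyclicDual b c a → z = cyclicDual c a b →
      x ≠ 0 → y ≠ 0 → z ≠ 0 →
      cyclicDual x y z = a ∧ cyclicDual y z x = b ∧ cyclicDual z x y = c ∧
      cyclicRatio x y z = -cyclicRatio a b c ∧
      cyclicRatio y z x = -cyclicRatio b c a ∧
      cyclicRatio z x y = -cyclicRatio c a b) := by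
  refine ⟨prod_one_add_cyclicRatio ha hb hc,
    fun _ _ _ => exists_eq_mul_of_cyclicRatio_eq ha hb hc, ?_⟩
  rintro _ _ _ rfl rfl rfl hx hy hz
  exact ⟨cyclicDual_cyclicDual ha hb hc hy hz, cyclicDual_cyclicDual hb hc ha hz hx,
    cyclicDual_cyclicDual hc ha hb hx hy, cyclicRatio_cyclicDual ha hb hc hx,
    cyclicRatio_cyclicDual hb hc ha hy, cyclicRatio_cyclicDual hc ha hb hz⟩

/-- Properties of `ρ(s)_k = (s_ℓ − s_m)/s_k`: the product identity, the
projective rigidity, and the involution `s ↦ s̃`. -/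
theorem stmt_9 (s1 s2 s3 : ℝ) (h1 : s1 ≠ 0) (h2 : s2 ≠ 0) (h3 : s3 ≠ 0) :
    ((1 + (s2 - s3) / s1) * (1 + (s3 - s1) / s2) * (1 + (s1 - s2) / s3)
      = (1 - (s2 - s3) / s1) * (1 - (s3 - s1) / s2) * (1 - (s1 - s2) / s3)) ∧
    (∀ s1' s2' s3' : ℝ, s1' ≠ 0 → s2' ≠ 0 → s3' ≠ 0 →
      (s2' - s3') / s1' = (s2 - s3) / s1 →
      (s3' - s1') / s2' = (s3 - s1) / s2 →
      (s1' - s2') / s3' = (s1 - s2) / s3 →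
      ∃ l : ℝ, l ≠ 0 ∧ s1' = l * s1 ∧ s2' = l * s2 ∧ s3' = l * s3) ∧
    (∀ t1 t2 t3 : ℝ,
      t1 = (-s1 + s2 + s3) / (s2 * s3) →
      t2 = (-s2 + s3 + s1) / (s3 * s1) →
      t3 = (-s3 + s1 + s2) / (s1 * s2) →
      t1 ≠ 0 → t2 ≠ 0 → t3 ≠ 0 →
      ((-t1 + t2 + t3) / (t2 * t3) = s1 ∧
       (-t2 + t3 + t1) / (t3 * t1) = s2 ∧
       (-t3 + t1 + t2) / (t1 * t2) = s3 ∧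
       (t2 - t3) / t1 = -((s2 - s3) / s1) ∧
       (t3 - t1) / t2 = -((s3 - s1) / s2) ∧
       (t1 - t2) / t3 = -((s1 - s2) / s3))) :=
  stmt_9_general h1 h2 h3
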